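/- arXiv:1507.03734 — 2 statements merged into one kernel-verified Lean document; each statement's English description precedes it below -/
import Mathlib

section
/- Suppose g is in addition μ_g-strongly convex with μ_g > 0, ‖A‖ > 0, and (u⋆, v⋆, λ⋆) is a KKT point with f⋆ = f(u⋆,v⋆) = −d(λ⋆). Run the strongly convex SAMA variant with λ̂⁰ := 0 and the alternative update rules τ_k := 3/(k+4), η_k := μ_gτ_k/‖A‖², β_k := 2‖A‖²/(μ_g(k+1)) for k ≥ 1 (iterates: λ̂ᵏ := (1−τ_k)λ̄ᵏ + τ_kλ*_k with λ*_k updated by λ*_{k+1} := β_{k+1}⁻¹[(1−τ_k)β_kλ*_k + τ_kη_k⁻¹(λ̄ᵏ⁺¹ − λ̂ᵏ)]; ûᵏ⁺¹ := argmin_u { g(u) − ⟨Aᵀλ̂ᵏ, u⟩ }; v̂ᵏ⁺¹ := argmin_v { h(v) − ⟨Bᵀλ̂ᵏ, v⟩ + (η_k/2)‖Aûᵏ⁺¹ + Bv − c‖² }; λ̄ᵏ⁺¹ := λ̂ᵏ − η_k(Aûᵏ⁺¹ + Bv̂ᵏ⁺¹ − c); (ūᵏ⁺¹,v̄ᵏ⁺¹)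 := (1−τ_k)(ūᵏ,v̄ᵏ) + τ_k(ûᵏ⁺¹,v̂ᵏ⁺¹)). Then for every k ≥ 1: f(x̄ᵏ) − f⋆ ≤ 27μ_gD_f²/(4‖A‖²(k+3)²) and ‖Aūᵏ + Bv̄ᵏ − c‖ ≤ 4‖A‖²‖λ⋆‖/(μ_g(k+1)) + (3√3/(k+3))·D_f/√(k+1), where x̄ᵏ = (ūᵏ, v̄ᵏ). -/
open scoped RealInnerProductSpace

noncomputable section

/-!
The scheme is an accelerated proximal-gradient method on the dual function `d`, combined with primal
averaging. Put `L = ‖A‖² / μ_g`, let `r̄ₖ = A ūᵏ + B v̄ᵏ - c` be the averaged residual, and consider the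
smoothed duality gap
`Gₖ = g(ūᵏ) + h(v̄ᵏ) + d(λ̄ᵏ) + ‖r̄ₖ‖² / (2 βₖ)`.

Strong convexity of `g` makes `λ ↦ g*(Aᵀλ)` an `L`-smooth function, so a step from `λ̂` producing
`û, v̂`, the residual `r` and `λ̄ = λ̂ - η r` satisfies
`d(λ̄) ≤ ⟪r, λ̂⟫ - g(û) - h(v̂) - η (1 - L η / 2) ‖r‖²` (`dual_step`), while `⟪r, ·⟫ - g(û) - h(v̂)`
is a global minorant of `d` (`dual_lower`). Since `λ*ₖ = -r̄ₖ / βₖ`, combining both with the convexity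
of `g` and `h` gives
`Gₖ₊₁ ≤ (1 - τₖ) Gₖ + (τₖ / L) (2 - k) / (4 (k + 4)) ‖r‖²`,
and induction yields `Gₖ ≤ 27 D_f² / (4 L (k + 3)²)`.

Weak duality `d(λ̄ᵏ) ≥ -f⋆` turns this into the objective bound. The KKT inequality
`g(ūᵏ) + h(v̄ᵏ) - f⋆ ≥ ⟪λ⋆, r̄ₖ⟫ ≥ -‖λ⋆‖ ‖r̄ₖ‖` turns it into a quadratic inequality for `‖r̄ₖ‖`, which
gives the feasibility bound.
-/

/-! ### First-order optimality conditions -/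

/-- First-order condition along a segment: divide by `t` and let `t → 0`. -/
lemma nonneg_of_forall_small {X Y : ℝ}
    (H : ∀ t : ℝ, 0 < t → t < 1 → 0 ≤ t * X + t ^ 2 * Y) : 0 ≤ X := by
  by_contra hX
  push Not at hX
  have hpos : 0 < |Y| - X + 1 := by have := abs_nonneg Y; linarith
  -- This `t` makes `t * Y` smaller than `-X`.
  have ht0 : 0 < -X / (|Y| - X + 1) := div_pos (by linarith) hpos
  have ht1 : -X / (|Y| - X + 1) < 1 := by
    rw [div_lt_one hpos]; have := abs_nonneg Y; linarith
  have h1 := H _ ht0 ht1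
  set t := -X / (|Y| - X + 1) with ht
  have htX : t * (|Y| - X + 1) = -X := by rw [ht]; field_simp
  have h2 : 0 ≤ X + t * Y := by
    by_contra hc
    push Not at hc
    nlinarith
  have h3 : t * Y ≤ t * |Y| := mul_le_mul_of_nonneg_left (le_abs_self Y) ht0.le
  nlinarith

/-- A minimizer of a strongly convex function minus a linear form has quadratic growth. -/
lemma strong_growth {E : Type*} [NormedAddCommGroup E] [InnerProductSpace ℝ E]
    {s : Set E} {g : E → ℝ} {μ : ℝ} (hg : StrongConvexOn s μ g) {z u₀ u : E}
    (h0 : u₀ ∈ s) (hmin : ∀ w ∈ s, g u₀ - ⟪z, u₀⟫ ≤ g w - ⟪z, w⟫) (hu : u ∈ s) :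
    g u₀ + ⟪z, u - u₀⟫ + μ / 2 * ‖u - u₀‖ ^ 2 ≤ g u := by
  have key : 0 ≤ g u - g u₀ - ⟪z, u - u₀⟫ - μ / 2 * ‖u - u₀‖ ^ 2 := by
    apply nonneg_of_forall_small (Y := μ / 2 * ‖u - u₀‖ ^ 2)
    intro t ht0 ht1
    have h1 := hg.2 h0 hu (by linarith : 0 ≤ 1 - t) ht0.le (by ring)
    have h2 := hmin _ (hg.1 h0 hu (by linarith : 0 ≤ 1 - t) ht0.le (by ring))
    simp only [smul_eq_mul, inner_add_right, inner_smul_right, norm_sub_rev u₀ u] at h1 h2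
    rw [inner_sub_right]
    nlinarith
  linarith

/-- The optimality condition of the proximal step in `v`: `Bᵀ(λ̂ - η r) ∈ ∂h(v̂)`. -/
lemma prox_subgradient {F H : Type*} [NormedAddCommGroup F] [InnerProductSpace ℝ F]
    [NormedAddCommGroup H] [InnerProductSpace ℝ H]
    {s : Set F} {h : F → ℝ} (hh : ConvexOn ℝ s h) (B : F →L[ℝ] H) (a c lam : H) (η : ℝ) {v₀ v : F}
    (h0 : v₀ ∈ s)
    (hmin : ∀ w ∈ s, h v₀ - ⟪lam, B v₀⟫ + η / 2 * ‖a + B v₀ - c‖ ^ 2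
      ≤ h w - ⟪lam, B w⟫ + η / 2 * ‖a + B w - c‖ ^ 2) (hv : v ∈ s) :
    h v₀ + ⟪lam - η • (a + B v₀ - c), B v - B v₀⟫ ≤ h v := by
  have key : 0 ≤ h v - h v₀ - ⟪lam - η • (a + B v₀ - c), B v - B v₀⟫ := by
    apply nonneg_of_forall_small (Y := η / 2 * ‖B v - B v₀‖ ^ 2)
    intro t ht0 ht1
    have h1 := hh.2 h0 hv (by linarith : 0 ≤ 1 - t) ht0.le (by ring)
    have h2 := hmin _ (hh.1 h0 hv (by linarith : 0 ≤ 1 - t) ht0.le (by ring))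
    have e : a + B ((1 - t) • v₀ + t • v) - c = (a + B v₀ - c) + t • (B v - B v₀) := by
      simp only [map_add, map_smul]; module
    have e2 : B ((1 - t) • v₀ + t • v) = B v₀ + t • (B v - B v₀) := by
      simp only [map_add, map_smul]; module
    rw [e, norm_add_sq_real, e2, norm_smul, mul_pow, Real.norm_eq_abs, sq_abs] at h2
    simp only [smul_eq_mul, inner_add_right, inner_smul_right] at h1 h2
    rw [inner_sub_left, real_inner_smul_left]
    nlinarith
  linarith

/-- Young's inequality for the operator `A`: the conjugate of `μ/2 ‖·‖²` after `Aᵀ`. -/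
lemma young_op {E H : Type*} [NormedAddCommGroup E] [InnerProductSpace ℝ E]
    [NormedAddCommGroup H] [InnerProductSpace ℝ H] (A : E →L[ℝ] H) {μ : ℝ} (hμ : 0 < μ)
    (y : H) (x : E) :
    ⟪y, A x⟫ - μ / 2 * ‖x‖ ^ 2 ≤ ‖A‖ ^ 2 / μ / 2 * ‖y‖ ^ 2 := by
  have h1 : ⟪y, A x⟫ ≤ ‖y‖ * (‖A‖ * ‖x‖) :=
    (real_inner_le_norm _ _).trans (mul_le_mul_of_nonneg_left (A.le_opNorm x) (norm_nonneg _))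
  have h2 : ‖A‖ ^ 2 / μ / 2 * ‖y‖ ^ 2 - (‖y‖ * (‖A‖ * ‖x‖) - μ / 2 * ‖x‖ ^ 2)
      = (‖A‖ * ‖y‖ - μ * ‖x‖) ^ 2 / (2 * μ) := by field_simp; ring
  have h3 : 0 ≤ (‖A‖ * ‖y‖ - μ * ‖x‖) ^ 2 / (2 * μ) := by positivity
  linarith

/-! ### The dual function -/

section Dual

variable {E F H : Type*}
  [NormedAddCommGroup E] [InnerProductSpace ℝ E] [CompleteSpace E]
  [NormedAddCommGroup F] [InnerProductSpace ℝ F] [CompleteSpace F]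
  [NormedAddCommGroup H] [InnerProductSpace ℝ H] [CompleteSpace H]

/-- Every primal pair gives an affine minorant of the dual function (Fenchel–Young). -/
lemma dual_lower {g : E → ℝ} {domg : Set E} {h : F → ℝ} {domh : Set F}
    (A : E →L[ℝ] H) (B : F →L[ℝ] H) (c : H) {gstar : E → ℝ} {hstar : F → ℝ}
    (hgstar : ∀ z, IsLUB ((fun u => ⟪z, u⟫ - g u) '' domg) (gstar z))
    (hhstar : ∀ z, IsLUB ((fun v => ⟪z, v⟫ - h v) '' domh) (hstar z))
    {d : H → ℝ}
    (hd : ∀ lam, d lam = gstar ((ContinuousLinearMap.adjoint A) lam)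
      + hstar ((ContinuousLinearMap.adjoint B) lam) - ⟪c, lam⟫)
    {u : E} {v : F} (hu : u ∈ domg) (hv : v ∈ domh) (lam : H) :
    ⟪A u + B v - c, lam⟫ - g u - h v ≤ d lam := by
  have h1 := (hgstar ((ContinuousLinearMap.adjoint A) lam)).1 ⟨u, hu, rfl⟩
  have h2 := (hhstar ((ContinuousLinearMap.adjoint B) lam)).1 ⟨v, hv, rfl⟩
  simp only [ContinuousLinearMap.adjoint_inner_left] at h1 h2
  rw [hd, inner_sub_left, inner_add_left, real_inner_comm lam, real_inner_comm lam]
  linarith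

/-- Descent inequality for one alternating minimization step started at `lam`: a forward step on the
`‖A‖²/μ`-smooth part `λ ↦ g*(Aᵀλ)` followed by a backward step on the remaining part of `d`. -/
lemma dual_step {g : E → ℝ} {domg : Set E} {h : F → ℝ} {domh : Set F}
    (A : E →L[ℝ] H) (B : F →L[ℝ] H) (c : H) {gstar : E → ℝ} {hstar : F → ℝ}
    (hgstar : ∀ z, IsLUB ((fun u => ⟪z, u⟫ - g u) '' domg) (gstar z))
    (hhstar : ∀ z, IsLUB ((fun v => ⟪z, v⟫ - h v) '' domh) (hstar z))
    {d : H → ℝ}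
    (hd : ∀ lam, d lam = gstar ((ContinuousLinearMap.adjoint A) lam)
      + hstar ((ContinuousLinearMap.adjoint B) lam) - ⟪c, lam⟫)
    {μ : ℝ} (hμ : 0 < μ) (hgsc : StrongConvexOn domg μ g) (hh : ConvexOn ℝ domh h)
    {u₀ : E} {v₀ : F} {lam : H} {η : ℝ}
    (hu : u₀ ∈ domg ∧ ∀ u ∈ domg, g u₀ - ⟪(ContinuousLinearMap.adjoint A) lam, u₀⟫
      ≤ g u - ⟪(ContinuousLinearMap.adjoint A) lam, u⟫)
    (hv : v₀ ∈ domh ∧ ∀ v ∈ domh,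
      h v₀ - ⟪(ContinuousLinearMap.adjoint B) lam, v₀⟫ + η / 2 * ‖A u₀ + B v₀ - c‖ ^ 2
      ≤ h v - ⟪(ContinuousLinearMap.adjoint B) lam, v⟫ + η / 2 * ‖A u₀ + B v - c‖ ^ 2) :
    d (lam - η • (A u₀ + B v₀ - c)) ≤ ⟪A u₀ + B v₀ - c, lam⟫ - g u₀ - h v₀
      - (η - ‖A‖ ^ 2 / μ / 2 * η ^ 2) * ‖A u₀ + B v₀ - c‖ ^ 2 := by
  set r := A u₀ + B v₀ - c with hr
  have hG : gstar ((ContinuousLinearMap.adjoint A) (lam - η • r))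
      ≤ ⟪lam - η • r, A u₀⟫ - g u₀ + ‖A‖ ^ 2 / μ / 2 * (η ^ 2 * ‖r‖ ^ 2) := by
    apply (hgstar _).2
    rintro _ ⟨u, hud, rfl⟩
    have h1 := strong_growth hgsc hu.1 hu.2 hud
    have h2 := young_op A hμ (-(η • r)) (u - u₀)
    rw [norm_neg, norm_smul, mul_pow, Real.norm_eq_abs, sq_abs] at h2
    simp only [ContinuousLinearMap.adjoint_inner_left, map_sub, inner_sub_right, inner_sub_left,
      inner_neg_left] at h1 h2 ⊢
    linarith
  have hH : hstar ((ContinuousLinearMap.adjoint B) (lam - η • r))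
      ≤ ⟪lam - η • r, B v₀⟫ - h v₀ := by
    apply (hhstar _).2
    rintro _ ⟨v, hvd, rfl⟩
    have hv2 := hv.2
    simp only [ContinuousLinearMap.adjoint_inner_left] at hv2 ⊢
    have h1 := prox_subgradient hh B (A u₀) c lam η hv.1 hv2 hvd
    rw [← hr, inner_sub_right] at h1
    linarith
  have e : ⟪lam - η • r, A u₀⟫ + ⟪lam - η • r, B v₀⟫ - ⟪c, lam - η • r⟫
      = ⟪r, lam⟫ - η * ‖r‖ ^ 2 := by
    rw [real_inner_comm (lam - η • r) c, ← inner_add_right, ← inner_sub_right, ← hr, inner_sub_left,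
      real_inner_smul_left, real_inner_self_eq_norm_sq, real_inner_comm]
  rw [hd]
  linarith

end Dual

/-! ### The smoothed gap recursion -/

/-- One step of the recursion on the smoothed gap, in scalar form. Here `x = k`, `P = ‖r̄ₖ‖²`, `Q = ⟪r, r̄ₖ⟫`,
`R = ‖r‖²` and `N = ‖r̄ₖ₊₁‖²`; `f₀, f₁, fh` are the objective values at the averaged points and at the
new point, `d₀, d₁` the dual values, and `q = ⟪r, λ̄ᵏ⟫`. -/
lemma gap_recursion {x L D P Q R N f₀ f₁ fh d₀ d₁ q : ℝ} (hx : 1 ≤ x) (hL : 0 < L)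
    (hR0 : 0 ≤ R) (hR : R ≤ D ^ 2) (hN0 : 0 ≤ N)
    (hN : N = (1 - 3 / (x + 4)) ^ 2 * P + 2 * (3 / (x + 4)) * (1 - 3 / (x + 4)) * Q
      + (3 / (x + 4)) ^ 2 * R)
    (hf : f₁ ≤ (1 - 3 / (x + 4)) * f₀ + 3 / (x + 4) * fh)
    (hd₀ : q - fh ≤ d₀)
    (hd₁ : d₁ ≤ (1 - 3 / (x + 4)) * q + 3 / (x + 4) * (-((x + 1) / (2 * L)) * Q) - fh
      - (3 / (x + 4) / L - L / 2 * (3 / (x + 4) / L) ^ 2) * R)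
    (hG : f₀ + d₀ + (x + 1) / (4 * L) * P ≤ 27 / 4 * D ^ 2 / (L * (x + 3) ^ 2)) :
    f₁ + d₁ + (x + 2) / (4 * L) * N ≤ 27 / 4 * D ^ 2 / (L * (x + 4) ^ 2) := by
  have hτ : 1 - 3 / (x + 4) = (x + 1) / (x + 4) := by field_simp; ring
  rw [hτ] at hN hf hd₁
  have ha : 0 ≤ (x + 1) / (x + 4) := by positivity
  have h1 := mul_le_mul_of_nonneg_left hd₀ ha
  have h2 := mul_le_mul_of_nonneg_left hG ha
  -- The slack `N / (2 L)` comes from `1 / βₖ - (1 - τₖ) / βₖ₊₁ = (1 - τₖ) / L`.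
  have key : (x + 1) / (x + 4) * ((x + 1) / (4 * L) * P) + 3 / (4 * L) * (2 - x) / (x + 4) ^ 2 * R
      = 3 / (x + 4) * (-((x + 1) / (2 * L)) * Q)
        - (3 / (x + 4) / L - L / 2 * (3 / (x + 4) / L) ^ 2) * R + (x + 2) / (4 * L) * N
        + N / (2 * L) := by
    rw [hN]; field_simp; ring
  have hNL : 0 ≤ N / (2 * L) := by positivity
  have hfin : (x + 1) / (x + 4) * (27 / 4 * D ^ 2 / (L * (x + 3) ^ 2))
      + 3 / (4 * L) * (2 - x) / (x + 4) ^ 2 * R ≤ 27 / 4 * D ^ 2 / (L * (x + 4) ^ 2) := by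
    have e0 : 27 / 4 * D ^ 2 / (L * (x + 4) ^ 2)
        - (x + 1) / (x + 4) * (27 / 4 * D ^ 2 / (L * (x + 3) ^ 2))
        = 27 / 4 * D ^ 2 * (x + 5) / (L * (x + 4) ^ 2 * (x + 3) ^ 2) := by
      field_simp; ring
    -- The coefficient of `R` is positive only for `x < 2`, i.e. at the single index `k = 1`.
    rcases le_total 2 x with h2x | hx2
    · have e1 : 3 / (4 * L) * (2 - x) / (x + 4) ^ 2 * R ≤ 0 := by
        have : 3 / (4 * L) * (2 - x) / (x + 4) ^ 2 * R
            = -(3 / (4 * L) / (x + 4) ^ 2 * ((x - 2) * R)) := by ring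
        rw [this, neg_nonpos]
        exact mul_nonneg (by positivity) (mul_nonneg (by linarith) hR0)
      have : 0 ≤ 27 / 4 * D ^ 2 * (x + 5) / (L * (x + 4) ^ 2 * (x + 3) ^ 2) := by positivity
      linarith
    · have e1 : 3 / (4 * L) * (2 - x) / (x + 4) ^ 2 * R
          ≤ 3 / (4 * L) / (x + 4) ^ 2 * D ^ 2 := by
        have : 3 / (4 * L) * (2 - x) / (x + 4) ^ 2 * R
            = 3 / (4 * L) / (x + 4) ^ 2 * ((2 - x) * R) := by ring
        rw [this]
        apply mul_le_mul_of_nonneg_left _ (by positivity)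
        nlinarith
      have e2 : 27 / 4 * D ^ 2 / (L * (x + 4) ^ 2)
          - (x + 1) / (x + 4) * (27 / 4 * D ^ 2 / (L * (x + 3) ^ 2))
          - 3 / (4 * L) / (x + 4) ^ 2 * D ^ 2
          = 3 / 4 * D ^ 2 * (9 * (x + 5) - (x + 3) ^ 2) / (L * (x + 4) ^ 2 * (x + 3) ^ 2) := by
        field_simp; ring
      have : 0 ≤ 3 / 4 * D ^ 2 * (9 * (x + 5) - (x + 3) ^ 2)
          / (L * (x + 4) ^ 2 * (x + 3) ^ 2) := by
        have : 0 ≤ 9 * (x + 5) - (x + 3) ^ 2 := by nlinarith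
        positivity
      linarith
  have expand : (x + 1) / (x + 4) * (q - fh) + (x + 1) / (x + 4) * fh = (x + 1) / (x + 4) * q := by
    ring
  have hone : (x + 1) / (x + 4) * fh + 3 / (x + 4) * fh = fh := by field_simp; ring
  linarith

/-- Solves the quadratic inequality for the residual norm; it is applied with `b = 2 βₖ`, `l = ‖λ⋆‖`. -/
lemma quad_bound {y b l s : ℝ} (hb : 0 ≤ b) (hl : 0 ≤ l) (hs : 0 ≤ s)
    (H : y ^ 2 ≤ b * l * y + s ^ 2) : y ≤ b * l + s := by
  by_contra hc
  push Not at hc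
  have hbl : 0 ≤ b * l := mul_nonneg hb hl
  nlinarith [mul_nonneg hbl hs]

/-! ### Convergence bounds -/

theorem stmt_12 {p₁ p₂ n : ℕ}
    (g : EuclideanSpace ℝ (Fin p₁) → ℝ) (domg : Set (EuclideanSpace ℝ (Fin p₁)))
    (h : EuclideanSpace ℝ (Fin p₂) → ℝ) (domh : Set (EuclideanSpace ℝ (Fin p₂)))
    (A : EuclideanSpace ℝ (Fin p₁) →L[ℝ] EuclideanSpace ℝ (Fin n))
    (B : EuclideanSpace ℝ (Fin p₂) →L[ℝ] EuclideanSpace ℝ (Fin n))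
    (c : EuclideanSpace ℝ (Fin n))
    (hgconv : ConvexOn ℝ domg g) (hglsc : LowerSemicontinuousOn g domg)
    (hgne : domg.Nonempty)
    (hhconv : ConvexOn ℝ domh h) (hhlsc : LowerSemicontinuousOn h domh)
    (hhne : domh.Nonempty)
    (gstar : EuclideanSpace ℝ (Fin p₁) → ℝ) (hstar : EuclideanSpace ℝ (Fin p₂) → ℝ)
    (hgstar : ∀ z, IsLUB ((fun u => ⟪z, u⟫ - g u) '' domg) (gstar z))
    (hhstar : ∀ z, IsLUB ((fun v => ⟪z, v⟫ - h v) '' domh) (hstar z))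
    (d : EuclideanSpace ℝ (Fin n) → ℝ)
    (hd : ∀ lam, d lam = gstar ((ContinuousLinearMap.adjoint A) lam) + hstar ((ContinuousLinearMap.adjoint B) lam) - ⟪c, lam⟫)
    (ustar : EuclideanSpace ℝ (Fin p₁)) (vstar : EuclideanSpace ℝ (Fin p₂)) (lamstar : EuclideanSpace ℝ (Fin n))
    (hustar : ustar ∈ domg) (hvstar : vstar ∈ domh)
    (hkkt0 : A ustar + B vstar = c)
    (hkktg : ∀ u ∈ domg, g ustar + ⟪(ContinuousLinearMap.adjoint A) lamstar, u - ustar⟫ ≤ g u)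
    (hkkth : ∀ v ∈ domh, h vstar + ⟪(ContinuousLinearMap.adjoint B) lamstar, v - vstar⟫ ≤ h v)
    (hA : 0 < ‖A‖)
    (μg : ℝ) (hμg : 0 < μg) (hgsc : StrongConvexOn domg μg g)
    (fstar : ℝ)
    (hfs : fstar = g ustar + h vstar)
    (hfd : fstar = -(d lamstar))
    (Df : ℝ)
    (hDf : IsLUB {r : ℝ | ∃ u ∈ domg, ∃ v ∈ domh, r = ‖A u + B v - c‖} Df)
    (ub : ℕ → EuclideanSpace ℝ (Fin p₁)) (vb : ℕ → EuclideanSpace ℝ (Fin p₂)) (lb ls lh : ℕ → EuclideanSpace ℝ (Fin n))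
    (uh : ℕ → EuclideanSpace ℝ (Fin p₁)) (vh : ℕ → EuclideanSpace ℝ (Fin p₂))
    (hub1 : ub 1 ∈ domg ∧ ∀ u ∈ domg,
      g (ub 1) - ⟪(ContinuousLinearMap.adjoint A) 0, ub 1⟫ ≤ g u - ⟪(ContinuousLinearMap.adjoint A) 0, u⟫)
    (hvb1 : vb 1 ∈ domh ∧ ∀ v ∈ domh,
      h (vb 1) - ⟪(ContinuousLinearMap.adjoint B) 0, vb 1⟫ + (μg*(3/4)/‖A‖^2)/2 * ‖A (ub 1) + B (vb 1) - c‖^2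
        ≤ h v - ⟪(ContinuousLinearMap.adjoint B) 0, v⟫ + (μg*(3/4)/‖A‖^2)/2 * ‖A (ub 1) + B v - c‖^2)
    (hlb1 : lb 1 = (0 : EuclideanSpace ℝ (Fin n)) - (μg*(3/4)/‖A‖^2) • (A (ub 1) + B (vb 1) - c))
    (hls1 : ls 1 = (2*‖A‖^2/(μg*2))⁻¹ • (c - A (ub 1) - B (vb 1)))
    (hlh : ∀ k : ℕ, 1 ≤ k →
      lh k = (1 - 3/((k:ℝ)+4)) • lb k + (3/((k:ℝ)+4)) • ls k)
    (huh : ∀ k : ℕ, 1 ≤ k → uh (k+1) ∈ domg ∧ ∀ u ∈ domg,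
      g (uh (k+1)) - ⟪(ContinuousLinearMap.adjoint A) (lh k), uh (k+1)⟫ ≤ g u - ⟪(ContinuousLinearMap.adjoint A) (lh k), u⟫)
    (hvh : ∀ k : ℕ, 1 ≤ k → vh (k+1) ∈ domh ∧ ∀ v ∈ domh,
      h (vh (k+1)) - ⟪(ContinuousLinearMap.adjoint B) (lh k), vh (k+1)⟫
          + (μg*(3/((k:ℝ)+4))/‖A‖^2)/2 * ‖A (uh (k+1)) + B (vh (k+1)) - c‖^2
        ≤ h v - ⟪(ContinuousLinearMap.adjoint B) (lh k), v⟫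
          + (μg*(3/((k:ℝ)+4))/‖A‖^2)/2 * ‖A (uh (k+1)) + B v - c‖^2)
    (hlbk : ∀ k : ℕ, 1 ≤ k →
      lb (k+1) = lh k - (μg*(3/((k:ℝ)+4))/‖A‖^2) • (A (uh (k+1)) + B (vh (k+1)) - c))
    (hlsk : ∀ k : ℕ, 1 ≤ k →
      ls (k+1) = (2*‖A‖^2/(μg*((k:ℝ)+2)))⁻¹ •
        (((1 - 3/((k:ℝ)+4)) * (2*‖A‖^2/(μg*((k:ℝ)+1)))) • ls k
          + ((3/((k:ℝ)+4)) * (μg*(3/((k:ℝ)+4))/‖A‖^2)⁻¹) • (lb (k+1) - lh k)))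
    (hubk : ∀ k : ℕ, 1 ≤ k →
      ub (k+1) = (1 - 3/((k:ℝ)+4)) • ub k + (3/((k:ℝ)+4)) • uh (k+1))
    (hvbk : ∀ k : ℕ, 1 ≤ k →
      vb (k+1) = (1 - 3/((k:ℝ)+4)) • vb k + (3/((k:ℝ)+4)) • vh (k+1)) :
    ∀ k : ℕ, 1 ≤ k →
      g (ub k) + h (vb k) - fstar ≤ 27*μg*Df^2/(4*‖A‖^2*((k:ℝ)+3)^2) ∧
      ‖A (ub k) + B (vb k) - c‖
        ≤ 4*‖A‖^2*‖lamstar‖/(μg*((k:ℝ)+1))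
          + (3*Real.sqrt 3/((k:ℝ)+3)) * (Df/Real.sqrt ((k:ℝ)+1)) := by
  have hDf0 : ∀ u ∈ domg, ∀ v ∈ domh, ‖A u + B v - c‖ ≤ Df :=
    fun u hu v hv => hDf.1 ⟨u, hu, v, hv, rfl⟩
  have hDfnn : 0 ≤ Df := (norm_nonneg _).trans (hDf0 _ hustar _ hvstar)
  have hDfsq : ∀ u ∈ domg, ∀ v ∈ domh, ‖A u + B v - c‖ ^ 2 ≤ Df ^ 2 :=
    fun u hu v hv => pow_le_pow_left₀ (norm_nonneg _) (hDf0 u hu v hv) 2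
  obtain ⟨L, hLdef⟩ : ∃ L, L = ‖A‖ ^ 2 / μg := ⟨_, rfl⟩
  have hL : 0 < L := by rw [hLdef]; positivity
  have hη : ∀ t : ℝ, μg * t / ‖A‖ ^ 2 = t / L := fun t => by rw [hLdef]; field_simp
  have hβ : ∀ t : ℝ, 2 * ‖A‖ ^ 2 / (μg * t) = 2 * L / t := fun t => by rw [hLdef]; field_simp
  simp only [hη, hβ] at hvb1 hlb1 hls1 hvh hlbk hlsk
  -- The third conjunct says `λ*ₖ = -r̄ₖ / βₖ`, and the last one is the bound on the smoothed gap `Gₖ`.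
  have inv : ∀ k : ℕ, 1 ≤ k → ub k ∈ domg ∧ vb k ∈ domh ∧
      ls k = -(((k : ℝ) + 1) / (2 * L)) • (A (ub k) + B (vb k) - c) ∧
      g (ub k) + h (vb k) + d (lb k) + ((k : ℝ) + 1) / (4 * L) * ‖A (ub k) + B (vb k) - c‖ ^ 2
        ≤ 27 / 4 * Df ^ 2 / (L * ((k : ℝ) + 3) ^ 2) := by
    intro k hk
    induction k, hk using Nat.le_induction with
    | base =>
      refine ⟨hub1.1, hvb1.1, ?_, ?_⟩
      · rw [hls1]
        have : c - A (ub 1) - B (vb 1) = -(A (ub 1) + B (vb 1) - c) := by abel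
        rw [this, smul_neg, neg_smul]
        congr 2
        push_cast; field_simp; norm_num
      · have h1 := dual_step A B c hgstar hhstar hd hμg hgsc hhconv hub1 hvb1
        rw [← hlb1, inner_zero_right, ← hLdef] at h1
        have h2 := hDfsq _ hub1.1 _ hvb1.1
        have h3 : 0 ≤ ‖A (ub 1) + B (vb 1) - c‖ ^ 2 := by positivity
        set R := ‖A (ub 1) + B (vb 1) - c‖ ^ 2
        have e1 : (((1 : ℕ) : ℝ) + 1) / (4 * L) * R - (3 / 4 / L - L / 2 * (3 / 4 / L) ^ 2) * R
            = 1 / 32 * R / L := by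
          push_cast; field_simp; ring
        have e2 : 27 / 4 * Df ^ 2 / (L * (((1 : ℕ) : ℝ) + 3) ^ 2) = 27 / 64 * Df ^ 2 / L := by
          push_cast; field_simp; ring
        have e3 : 1 / 32 * R / L ≤ 27 / 64 * Df ^ 2 / L :=
          div_le_div_of_nonneg_right (by linarith) hL.le
        rw [e2]
        linarith
    | succ k hk ih =>
      obtain ⟨hu, hv, hls, hG⟩ := ih
      have hx : (1 : ℝ) ≤ k := by exact_mod_cast hk
      have ht0 : 0 ≤ 3 / ((k : ℝ) + 4) := by positivity
      have ht1 : 0 ≤ 1 - 3 / ((k : ℝ) + 4) := by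
        rw [sub_nonneg, div_le_one (by positivity)]; linarith
      have hts : (1 - 3 / ((k : ℝ) + 4)) + 3 / ((k : ℝ) + 4) = 1 := by ring
      have hr : A (ub (k + 1)) + B (vb (k + 1)) - c
          = (1 - 3 / ((k : ℝ) + 4)) • (A (ub k) + B (vb k) - c)
            + (3 / ((k : ℝ) + 4)) • (A (uh (k + 1)) + B (vh (k + 1)) - c) := by
        rw [hubk k hk, hvbk k hk]; simp only [map_add, map_smul]; module
      have hstep := dual_step A B c hgstar hhstar hd hμg hgsc hhconv (huh k hk) (hvh k hk)
      have hlow := dual_lower A B c hgstar hhstar hd (huh k hk).1 (hvh k hk).1 (lb k)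
      have hRD := hDfsq _ (huh k hk).1 _ (hvh k hk).1
      have hfg := hgconv.2 hu (huh k hk).1 ht1 ht0 hts
      have hfh := hhconv.2 hv (hvh k hk).1 ht1 ht0 hts
      rw [← hubk k hk] at hfg
      rw [← hvbk k hk] at hfh
      simp only [smul_eq_mul] at hfg hfh
      refine ⟨?_, ?_, ?_, ?_⟩
      · rw [hubk k hk]; exact hgconv.1 hu (huh k hk).1 ht1 ht0 hts
      · rw [hvbk k hk]; exact hhconv.1 hv (hvh k hk).1 ht1 ht0 hts
      · rw [hlsk k hk, hr, hls, hlbk k hk]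
        push_cast
        match_scalars <;> field_simp <;> ring
      · rw [← hlbk k hk, hlh k hk, hls, ← hLdef] at hstep
        have hN := norm_add_sq_real ((1 - 3 / ((k : ℝ) + 4)) • (A (ub k) + B (vb k) - c))
          ((3 / ((k : ℝ) + 4)) • (A (uh (k + 1)) + B (vh (k + 1)) - c))
        rw [← hr, norm_smul, norm_smul, mul_pow, mul_pow, Real.norm_eq_abs, Real.norm_eq_abs,
          sq_abs, sq_abs, real_inner_smul_left, real_inner_smul_right] at hN
        rw [inner_add_right, inner_smul_right, inner_smul_right, inner_smul_right,
          real_inner_comm (A (ub k) + B (vb k) - c)] at hstep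
        have := gap_recursion (f₁ := g (ub (k + 1)) + h (vb (k + 1))) (d₁ := d (lb (k + 1)))
          (f₀ := g (ub k) + h (vb k)) (fh := g (uh (k + 1)) + h (vh (k + 1)))
          hx hL (sq_nonneg ‖A (uh (k + 1)) + B (vh (k + 1)) - c‖) hRD
          (sq_nonneg ‖A (ub (k + 1)) + B (vb (k + 1)) - c‖)
          (P := ‖A (ub k) + B (vb k) - c‖ ^ 2)
          (Q := ⟪A (ub k) + B (vb k) - c, A (uh (k + 1)) + B (vh (k + 1)) - c⟫)
          (q := ⟪A (uh (k + 1)) + B (vh (k + 1)) - c, lb k⟫)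
          (by linarith) (by linarith) (by linarith) (by linarith) hG
        push_cast
        rw [show (k : ℝ) + 1 + 1 = k + 2 by ring, show (k : ℝ) + 1 + 3 = k + 4 by ring]
        exact this
  intro k hk
  obtain ⟨hu, hv, -, hG⟩ := inv k hk
  have hweak := dual_lower A B c hgstar hhstar hd hustar hvstar (lb k)
  rw [hkkt0, sub_self, inner_zero_left] at hweak
  have hS : 27 * μg * Df ^ 2 / (4 * ‖A‖ ^ 2 * ((k : ℝ) + 3) ^ 2)
      = 27 / 4 * Df ^ 2 / (L * ((k : ℝ) + 3) ^ 2) := by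
    rw [hLdef]; field_simp
  constructor
  · rw [hS]
    have : 0 ≤ ((k : ℝ) + 1) / (4 * L) * ‖A (ub k) + B (vb k) - c‖ ^ 2 := by positivity
    linarith
  · have hg1 := hkktg _ hu
    have hh1 := hkkth _ hv
    rw [ContinuousLinearMap.adjoint_inner_left, map_sub] at hg1 hh1
    have hin : ⟪lamstar, A (ub k) - A ustar⟫ + ⟪lamstar, B (vb k) - B vstar⟫
        = ⟪lamstar, A (ub k) + B (vb k) - c⟫ := by
      rw [← inner_add_right, ← hkkt0]; congr 1; abel
    have hcs := neg_le_of_abs_le (abs_real_inner_le_norm lamstar (A (ub k) + B (vb k) - c))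
    set y := ‖A (ub k) + B (vb k) - c‖
    have hmain : ((k : ℝ) + 1) / (4 * L) * y ^ 2
        ≤ ‖lamstar‖ * y + 27 / 4 * Df ^ 2 / (L * ((k : ℝ) + 3) ^ 2) := by linarith
    have e1 : 4 * ‖A‖ ^ 2 * ‖lamstar‖ / (μg * ((k : ℝ) + 1))
        = 4 * L / ((k : ℝ) + 1) * ‖lamstar‖ := by rw [hLdef]; field_simp
    rw [e1]
    apply quad_bound (by positivity) (norm_nonneg _) (by positivity)
    have e2 : (3 * √3 / ((k : ℝ) + 3) * (Df / √((k : ℝ) + 1))) ^ 2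
        = 4 * L / ((k : ℝ) + 1) * (27 / 4 * Df ^ 2 / (L * ((k : ℝ) + 3) ^ 2)) := by
      rw [mul_pow, div_pow, div_pow, mul_pow, Real.sq_sqrt (by norm_num),
        Real.sq_sqrt (by positivity)]
      field_simp; ring
    have e3 : y ^ 2 = 4 * L / ((k : ℝ) + 1) * (((k : ℝ) + 1) / (4 * L) * y ^ 2) := by field_simp
    rw [e2, e3, mul_assoc, ← mul_add]
    exact mul_le_mul_of_nonneg_left hmain (by positivity)
end
end

section
/- Let k ≥ 0 and suppose (ūᵏ, v̄ᵏ, λ̄ᵏ) ∈ dom g × dom h × ℝⁿ and v̂ᵏ ∈ dom h, and the next iterate is generated by: λ*_k := (1/β_k)(c − Aūᵏ − Bv̄ᵏ); λ̂ᵏ := (1−τ_k)λ̄ᵏ + τ_kλ*_k; ûᵏ⁺¹ minimizes u ↦ g(u) − ⟨Aᵀλ̂ᵏ, u⟩ + (ρ_k/2)‖Au + Bv̂ᵏ − c‖² + γ_{k+1} b(u, ū_c); v̂ᵏ⁺¹ minimizes v ↦ h(v) − ⟨Bᵀλ̂ᵏ, v⟩ + (η_k/2)‖Aûᵏ⁺¹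 + Bv − c‖²; λ̄ᵏ⁺¹ := λ̂ᵏ − η_k(Aûᵏ⁺¹ + Bv̂ᵏ⁺¹ − c); (ūᵏ⁺¹, v̄ᵏ⁺¹) := (1−τ_k)(ūᵏ, v̄ᵏ) + τ_k(ûᵏ⁺¹, v̂ᵏ⁺¹). If τ_k ∈ (0,1) and γ_k, γ_{k+1}, β_k, β_{k+1}, ρ_k, η_k > 0 satisfy (1−τ_k)(1+2τ_k)η_kβ_k ≥ 2τ_k², γ_{k+1} ≥ ((3−2τ_k)/(3−(2−L_b⁻¹)τ_k))·γ_k, β_{k+1} ≥ (1−τ_k)β_k, and γ_{k+1} ≥ ‖A‖²(η_k + ρ_k/τ_k), then G_{γ_{k+1},β_{k+1}}(w̄ᵏ⁺¹) ≤ (1−τ_k)·G_{γ_k,β_k}(w̄ᵏ) + ( τ_k²η_k/4 + τ_kρ_k/2 )·D_f², where w̄ᵏ = (ūᵏ, v̄ᵏ, λ̄ᵏ). -/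
/-!
Write `r̂ = A û + B v̂ - c`, `r̄ = A ū + B v̄ - c`, `Φ(u; λ, γ) = ⟪Aᵀλ, u⟫ - g u - γ b(u, u_c)`,
and let `u⁺` maximize `Φ(·; λ̄⁺, γ⁺)`.

* The primal part is convexity of `g`, `h`, together with `β⁺ ≥ (1-τ) β` and an expansion of
  `‖(1-τ) r̄ + τ r̂‖²` in which `r̄ = -β λ*` (`penalty_bound`).
* The `v`-step says that `Bᵀλ̄⁺` is a subgradient of `h` at `v̂`, so
  `h*(Bᵀλ̄⁺) = ⟪λ̄⁺, B v̂⟫ - h v̂`.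
* The objective of the `u`-step grows by `γ⁺/2 ‖u - û‖² + ρ/2 ‖A (u - û)‖²` away from its
  minimizer `û` (`min_growth`). At `u = u⁺`, after two applications of Young's inequality which use
  up exactly `γ⁺ ≥ ‖A‖² (η + ρ/τ)` (`dual_step`), this gives
  `Φ(u⁺; λ̄⁺, γ⁺) - η ⟪r̂, B v̂ - c⟫ ≤ Φ(û; λ̂, γ⁺) - η/2 ‖r̂‖² + τρ/2 D_f²`.
* Since `λ̂ = (1-τ) λ̄ + τ λ*`, the term `Φ(û; λ̂, γ⁺)` is controlled by `(1-τ) g*_γ(Aᵀλ̄)`,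
  provided `(1-τ) γ b(û, u_c) ≤ γ⁺ b(û, u_c)`. The condition on `γ⁺` implies this when `L_b ≥ 1`,
  and `L_b < 1` forces `û = u_c` (`one_le_lip`).

The remaining multiple of `‖r̂‖²` is at most `(1+2τ)η/4 - η/2 = (2τ-1)η/4 ≤ τ²η/4`.
-/

open scoped RealInnerProductSpace

noncomputable section

/-- Bregman distance generated by `ω` with gradient `ω'`. -/
noncomputable def breg {p : ℕ} (ω : EuclideanSpace ℝ (Fin p) → ℝ)
    (ω' : EuclideanSpace ℝ (Fin p) → EuclideanSpace ℝ (Fin p))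
    (u uh : EuclideanSpace ℝ (Fin p)) : ℝ :=
  ω u - ω uh - ⟪ω' uh, u - uh⟫

section Helpers

variable {E F : Type*} [NormedAddCommGroup E] [InnerProductSpace ℝ E]
  [NormedAddCommGroup F] [InnerProductSpace ℝ F]

/-- Quadratic growth at a minimizer: a uniform convexity defect `K` along the segment from the
minimizer `x` to `y` separates the two values by `K`. -/
lemma min_growth {s : Set E} (hs : Convex ℝ s) {f : E → ℝ} {x y : E} (hx : x ∈ s) (hy : y ∈ s)
    (K : ℝ) (hmin : ∀ z ∈ s, f x ≤ f z)
    (hf : ∀ t : ℝ, 0 < t → t < 1 →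
      f ((1 - t) • x + t • y) ≤ (1 - t) * f x + t * f y - t * (1 - t) * K) :
    f x + K ≤ f y := by
  by_contra! hlt
  have hxy := hmin y hy
  have hK : 0 < K := by linarith
  set δ := f x + K - f y with hδ
  have hδpos : 0 < δ := by linarith
  -- At `t = δ / (2K)` the defect exceeds what minimality of `x` allows.
  have ht0 : 0 < δ / (2 * K) := by positivity
  have ht1 : δ / (2 * K) < 1 := by
    rw [div_lt_one (by positivity)]; linarith
  have htK : δ / (2 * K) * K = δ / 2 := by field_simp
  have h1 := hf _ ht0 ht1
  have h2 := hmin _ (hs hx hy (by linarith : 0 ≤ 1 - δ / (2 * K)) ht0.le (by ring))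
  set t := δ / (2 * K)
  have h3 : 0 ≤ t * ((f y - f x) - (1 - t) * K) := by linarith
  have h4 := nonneg_of_mul_nonneg_right h3 ht0
  nlinarith

lemma norm_sq_combo (t : ℝ) (a b : F) :
    ‖(1 - t) • a + t • b‖ ^ 2
      = (1 - t) * ‖a‖ ^ 2 + t * ‖b‖ ^ 2 - t * (1 - t) * ‖b - a‖ ^ 2 := by
  simp only [← real_inner_self_eq_norm_sq, inner_add_left, inner_add_right, inner_sub_left,
    inner_sub_right, real_inner_smul_left, real_inner_smul_right, real_inner_comm a b]
  ring

/-- The quadratic penalty at the averaged point; the cross term is `-τ ⟪λ*, r̂⟫` for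
`λ* = -β⁻¹ r̄`. -/
lemma penalty_bound (rb rh : F) {τ β βp : ℝ} (h1 : τ < 1) (hβ : 0 < β)
    (hc3 : βp ≥ (1 - τ) * β) :
    1 / (2 * βp) * ‖(1 - τ) • rb + τ • rh‖ ^ 2
      ≤ (1 - τ) * (1 / (2 * β) * ‖rb‖ ^ 2) + τ * (β⁻¹ * ⟪rb, rh⟫)
        + τ ^ 2 / (2 * ((1 - τ) * β)) * ‖rh‖ ^ 2 := by
  have hτ' : 0 < 1 - τ := by linarith
  have hpos : 0 < (1 - τ) * β := by positivity
  have hle : 1 / (2 * βp) ≤ 1 / (2 * ((1 - τ) * β)) := by gcongr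
  refine (mul_le_mul_of_nonneg_right hle (sq_nonneg _)).trans (le_of_eq ?_)
  have e : ‖(1 - τ) • rb + τ • rh‖ ^ 2
      = (1 - τ) ^ 2 * ‖rb‖ ^ 2 + 2 * ((1 - τ) * τ) * ⟪rb, rh⟫ + τ ^ 2 * ‖rh‖ ^ 2 := by
    simp only [← real_inner_self_eq_norm_sq, inner_add_left, inner_add_right,
      real_inner_smul_left, real_inner_smul_right, real_inner_comm rb rh]
    ring
  rw [e]
  field_simp

/-- First-order form of strong convexity: `b(y, x) ≥ ‖y - x‖² / 2`. -/
lemma breg_lower {p : ℕ} {s : Set (EuclideanSpace ℝ (Fin p))}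
    {ω : EuclideanSpace ℝ (Fin p) → ℝ} {ω' : EuclideanSpace ℝ (Fin p) → EuclideanSpace ℝ (Fin p)}
    (hgrad : ∀ x, HasGradientAt ω (ω' x) x) (hsc : StrongConvexOn s 1 ω)
    {x y : EuclideanSpace ℝ (Fin p)} (hx : x ∈ s) (hy : y ∈ s) :
    1 / 2 * ‖y - x‖ ^ 2 ≤ breg ω ω' y x := by
  have hline : HasDerivAt (fun t : ℝ => x + t • (y - x)) (y - x) 0 := by
    simpa using ((hasDerivAt_id (0 : ℝ)).smul_const (y - x)).const_add x
  have hd : HasDerivAt (fun t : ℝ => ω (x + t • (y - x))) ⟪ω' x, y - x⟫ 0 := by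
    have h := hgrad (x + (0 : ℝ) • (y - x))
    have h2 := h.hasFDerivAt.comp_hasDerivAt (0 : ℝ) hline
    simpa [Function.comp_def] using h2
  have hlim := hd.tendsto_slope_zero_right
  have hrhs : Filter.Tendsto (fun t : ℝ => ω y - ω x - (1 - t) * (1 / 2 * ‖y - x‖ ^ 2))
      (nhdsWithin 0 (Set.Ioi 0)) (nhds (ω y - ω x - (1 - 0) * (1 / 2 * ‖y - x‖ ^ 2))) := by
    apply Filter.Tendsto.mono_left _ nhdsWithin_le_nhds
    exact Continuous.tendsto (by fun_prop) 0
  have hle := le_of_tendsto_of_tendsto hlim hrhs (by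
    filter_upwards [Ioo_mem_nhdsGT (zero_lt_one (α := ℝ))] with t ht
    have h := hsc.2 hx hy (by linarith [ht.2] : 0 ≤ 1 - t) ht.1.le (by ring)
    have e : (1 - t) • x + t • y = x + t • (y - x) := by module
    rw [e, norm_sub_rev x y] at h
    simp only [smul_eq_mul, zero_add, zero_smul, add_zero] at h ⊢
    rw [inv_mul_le_iff₀ ht.1]
    linarith)
  unfold breg
  linarith

/-- A 1-strongly convex function on a set with two distinct points cannot have a gradient with
Lipschitz constant below `1`. -/
lemma one_le_lip {p : ℕ} {s : Set (EuclideanSpace ℝ (Fin p))}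
    {ω : EuclideanSpace ℝ (Fin p) → ℝ} {ω' : EuclideanSpace ℝ (Fin p) → EuclideanSpace ℝ (Fin p)}
    (hgrad : ∀ x, HasGradientAt ω (ω' x) x) (hsc : StrongConvexOn s 1 ω) {L : ℝ} (hL : 0 < L)
    (hlip : LipschitzWith (Real.toNNReal L) ω')
    {x y : EuclideanSpace ℝ (Fin p)} (hx : x ∈ s) (hy : y ∈ s) (hne : y ≠ x) : 1 ≤ L := by
  have h1 := breg_lower hgrad hsc hx hy
  have h2 := breg_lower hgrad hsc hy hx
  have h3 : ‖ω' y - ω' x‖ ≤ L * ‖y - x‖ := by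
    simpa [hL.le] using hlip.norm_sub_le y x
  have h4 := real_inner_le_norm (ω' y - ω' x) (y - x)
  have h5 : 0 < ‖y - x‖ := norm_pos_iff.2 (sub_ne_zero.2 hne)
  rw [norm_sub_rev x y] at h2
  unfold breg at h1 h2
  rw [← neg_sub y x, inner_neg_right] at h2
  rw [inner_sub_left] at h4
  have h6 := mul_le_mul_of_nonneg_right h3 h5.le
  have h7 : 0 < ‖y - x‖ ^ 2 := by positivity
  nlinarith

/-- Young's inequality applied to both error terms of the `u`-step. Here `d` stands for `u⁺ - û`,
`q` for `A û + B v̂ᵏ - c` and `r` for `r̂`. -/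
lemma dual_step_s14 (A : E →L[ℝ] F) (d : E) (q r : F) {τ ρ η γp D : ℝ} (hτ : 0 < τ) (hρ : 0 < ρ)
    (hη : 0 < η) (hc4 : γp ≥ ‖A‖ ^ 2 * (η + ρ / τ)) (hq : ‖q‖ ≤ D) :
    ρ * ⟪q, A d⟫ - γp / 2 * ‖d‖ ^ 2 - η * ⟪r, A d⟫
      ≤ η / 2 * ‖r‖ ^ 2 + τ * ρ / 2 * D ^ 2 := by
  have hA : ‖A d‖ ^ 2 ≤ ‖A‖ ^ 2 * ‖d‖ ^ 2 := by
    rw [← mul_pow]; gcongr; exact A.le_opNorm d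
  have y1 : 0 ≤ ‖r‖ ^ 2 + 2 * ⟪r, A d⟫ + ‖A d‖ ^ 2 := by
    rw [← norm_add_sq_real]; positivity
  have y2 : 0 ≤ τ * ‖q‖ ^ 2 - 2 * ⟪q, A d⟫ + ‖A d‖ ^ 2 / τ := by
    have h := norm_sub_sq_real (τ • q) (A d)
    rw [norm_smul, mul_pow, Real.norm_of_nonneg hτ.le, real_inner_smul_left] at h
    have h' : τ * ‖q‖ ^ 2 - 2 * ⟪q, A d⟫ + ‖A d‖ ^ 2 / τ = ‖τ • q - A d‖ ^ 2 / τ := by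
      rw [h]; field_simp
    rw [h']; positivity
  have hq2 : ‖q‖ ^ 2 ≤ D ^ 2 := by gcongr
  have k1 : (η + ρ / τ) * ‖A d‖ ^ 2 ≤ γp * ‖d‖ ^ 2 := by
    calc (η + ρ / τ) * ‖A d‖ ^ 2 ≤ (η + ρ / τ) * (‖A‖ ^ 2 * ‖d‖ ^ 2) := by gcongr
      _ = (‖A‖ ^ 2 * (η + ρ / τ)) * ‖d‖ ^ 2 := by ring
      _ ≤ γp * ‖d‖ ^ 2 := by gcongr
  have k2 := mul_nonneg hη.le y1
  have k3 := mul_nonneg hρ.le y2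
  have k4 : ρ * (‖A d‖ ^ 2 / τ) = ρ / τ * ‖A d‖ ^ 2 := by ring
  have k5 := mul_le_mul_of_nonneg_left hq2 (mul_pos hτ hρ).le
  nlinarith

lemma one_sub_le_ratio {τ L : ℝ} (h0 : 0 < τ) (h1 : τ < 1) (hL : 1 ≤ L) :
    1 - τ ≤ (3 - 2 * τ) / (3 - (2 - L⁻¹) * τ) := by
  have hLi : L⁻¹ ≤ 1 := inv_le_one_of_one_le₀ hL
  have hLi0 : 0 < L⁻¹ := by positivity
  generalize L⁻¹ = l at *
  have hτ' : 0 < 1 - τ := by linarith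
  have hτl := mul_pos h0 hLi0
  rw [le_div_iff₀ (by linarith)]
  nlinarith [mul_pos h0 hτ', mul_nonneg (mul_pos h0 hτ').le (sub_nonneg.2 hLi)]

lemma residual_coef {τ β η : ℝ} (h1 : τ < 1) (hβ : 0 < β) (hη : 0 < η)
    (hc1 : (1 - τ) * (1 + 2 * τ) * η * β ≥ 2 * τ ^ 2) :
    τ ^ 2 / (2 * ((1 - τ) * β)) - η / 2 ≤ τ ^ 2 * η / 4 := by
  have hτ' : 0 < 1 - τ := by linarith
  have hk : τ ^ 2 / (2 * ((1 - τ) * β)) ≤ (1 + 2 * τ) * η / 4 := by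
    rw [div_le_iff₀ (by positivity)]
    linarith
  nlinarith [mul_nonneg hη.le (sq_nonneg (τ - 1))]

end Helpers

theorem stmt_14 {p₁ p₂ n : ℕ}
    (g : EuclideanSpace ℝ (Fin p₁) → ℝ) (domg : Set (EuclideanSpace ℝ (Fin p₁)))
    (h : EuclideanSpace ℝ (Fin p₂) → ℝ) (domh : Set (EuclideanSpace ℝ (Fin p₂)))
    (A : EuclideanSpace ℝ (Fin p₁) →L[ℝ] EuclideanSpace ℝ (Fin n))
    (B : EuclideanSpace ℝ (Fin p₂) →L[ℝ] EuclideanSpace ℝ (Fin n))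
    (c : EuclideanSpace ℝ (Fin n))
    (hgconv : ConvexOn ℝ domg g) (hglsc : LowerSemicontinuousOn g domg)
    (hgne : domg.Nonempty)
    (hhconv : ConvexOn ℝ domh h) (hhlsc : LowerSemicontinuousOn h domh)
    (hhne : domh.Nonempty)
    (hstar : EuclideanSpace ℝ (Fin p₂) → ℝ)
    (hhstar : ∀ z, IsLUB ((fun v => ⟪z, v⟫ - h v) '' domh) (hstar z))
    (ω : EuclideanSpace ℝ (Fin p₁) → ℝ) (ω' : EuclideanSpace ℝ (Fin p₁) → EuclideanSpace ℝ (Fin p₁))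
    (hωgrad : ∀ x, HasGradientAt ω (ω' x) x)
    (hωsc : StrongConvexOn domg 1 ω)
    (Lb : ℝ) (hLb : 0 < Lb) (hωlip : LipschitzWith (Real.toNNReal Lb) ω')
    (uc : EuclideanSpace ℝ (Fin p₁)) (huc : uc ∈ domg)
    (gS : ℝ → EuclideanSpace ℝ (Fin p₁) → ℝ) (uS : ℝ → EuclideanSpace ℝ (Fin p₁) → EuclideanSpace ℝ (Fin p₁))
    (hgS : ∀ γ : ℝ, 0 < γ → ∀ z : EuclideanSpace ℝ (Fin p₁),
      uS γ z ∈ domg ∧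
      (∀ u ∈ domg, ⟪z, u⟫ - g u - γ * breg ω ω' u uc
        ≤ ⟪z, uS γ z⟫ - g (uS γ z) - γ * breg ω ω' (uS γ z) uc) ∧
      (∀ u ∈ domg, ⟪z, u⟫ - g u - γ * breg ω ω' u uc
        = ⟪z, uS γ z⟫ - g (uS γ z) - γ * breg ω ω' (uS γ z) uc → u = uS γ z) ∧
      gS γ z = ⟪z, uS γ z⟫ - g (uS γ z) - γ * breg ω ω' (uS γ z) uc)
    (dG : ℝ → EuclideanSpace ℝ (Fin n) → ℝ)
    (hdG : ∀ γ lam, dG γ lam = gS γ ((ContinuousLinearMap.adjoint A) lam) + hstar ((ContinuousLinearMap.adjoint B) lam) - ⟪c, lam⟫)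
    (G : ℝ → ℝ → EuclideanSpace ℝ (Fin p₁) → EuclideanSpace ℝ (Fin p₂) → EuclideanSpace ℝ (Fin n) → ℝ)
    (hGdef : ∀ γ β u v lam, G γ β u v lam
      = g u + h v + 1/(2*β) * ‖A u + B v - c‖^2 + dG γ lam)
    (Df : ℝ)
    (hDf : IsLUB {r : ℝ | ∃ u ∈ domg, ∃ v ∈ domh, r = ‖A u + B v - c‖} Df)
    (ubar : EuclideanSpace ℝ (Fin p₁)) (vbar : EuclideanSpace ℝ (Fin p₂)) (lambar : EuclideanSpace ℝ (Fin n)) (vhatk : EuclideanSpace ℝ (Fin p₂))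
    (hubar : ubar ∈ domg) (hvbar : vbar ∈ domh) (hvhatk : vhatk ∈ domh)
    (τ γ γp β βp ρ η : ℝ)
    (hτ : τ ∈ Set.Ioo (0:ℝ) 1)
    (hγ : 0 < γ) (hγp : 0 < γp) (hβ : 0 < β) (hβp : 0 < βp)
    (hρ : 0 < ρ) (hηpos : 0 < η)
    (hc1 : (1 - τ) * (1 + 2*τ) * η * β ≥ 2*τ^2)
    (hc2 : γp ≥ ((3 - 2*τ)/(3 - (2 - Lb⁻¹)*τ)) * γ)
    (hc3 : βp ≥ (1 - τ) * β)
    (hc4 : γp ≥ ‖A‖^2 * (η + ρ/τ))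
    (lamstark lamhat : EuclideanSpace ℝ (Fin n)) (uhat : EuclideanSpace ℝ (Fin p₁)) (vhat : EuclideanSpace ℝ (Fin p₂))
    (ubarp : EuclideanSpace ℝ (Fin p₁)) (vbarp : EuclideanSpace ℝ (Fin p₂)) (lambarp : EuclideanSpace ℝ (Fin n))
    (hlamstark : lamstark = β⁻¹ • (c - A ubar - B vbar))
    (hlamhat : lamhat = (1 - τ) • lambar + τ • lamstark)
    (huhat : uhat ∈ domg ∧ ∀ u ∈ domg,
      g uhat - ⟪(ContinuousLinearMap.adjoint A) lamhat, uhat⟫ + ρ/2 * ‖A uhat + B vhatk - c‖^2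
          + γp * breg ω ω' uhat uc
        ≤ g u - ⟪(ContinuousLinearMap.adjoint A) lamhat, u⟫ + ρ/2 * ‖A u + B vhatk - c‖^2
          + γp * breg ω ω' u uc)
    (hvhat : vhat ∈ domh ∧ ∀ v ∈ domh,
      h vhat - ⟪(ContinuousLinearMap.adjoint B) lamhat, vhat⟫ + η/2 * ‖A uhat + B vhat - c‖^2
        ≤ h v - ⟪(ContinuousLinearMap.adjoint B) lamhat, v⟫ + η/2 * ‖A uhat + B v - c‖^2)
    (hlambarp : lambarp = lamhat - η • (A uhat + B vhat - c))
    (hubarp : ubarp = (1 - τ) • ubar + τ • uhat)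
    (hvbarp : vbarp = (1 - τ) • vbar + τ • vhat) :
    G γp βp ubarp vbarp lambarp
      ≤ (1 - τ) * G γ β ubar vbar lambar + (τ^2*η/4 + τ*ρ/2) * Df^2 := by
  obtain ⟨hτ0, hτ1⟩ := hτ
  have hτ' : 0 < 1 - τ := by linarith
  obtain ⟨huh, humin⟩ := huhat
  obtain ⟨hvh, hvmin⟩ := hvhat
  simp only [ContinuousLinearMap.adjoint_inner_left] at humin hvmin
  have hD : ∀ u ∈ domg, ∀ v ∈ domh, ‖A u + B v - c‖ ≤ Df :=
    fun u hu v hv => hDf.1 ⟨u, hu, v, hv, rfl⟩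
  -- Optimality of the `v`-step: `Bᵀλ̄⁺` is a subgradient of `h` at `v̂`.
  have hsub : ∀ v ∈ domh, ⟪lambarp, B v⟫ - h v ≤ ⟪lambarp, B vhat⟫ - h vhat := by
    intro v hv
    have hgr := min_growth hhconv.1 (f := fun v => h v - ⟪lamhat, B v⟫
      + η / 2 * ‖A uhat + B v - c‖ ^ 2) hvh hv (η / 2 * ‖B (v - vhat)‖ ^ 2) hvmin (by
        intro t ht0 ht1
        have hcv := hhconv.2 hvh hv (by linarith : 0 ≤ 1 - t) ht0.le (by ring)
        have e : A uhat + B ((1 - t) • vhat + t • v) - c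
            = (1 - t) • (A uhat + B vhat - c) + t • (A uhat + B v - c) := by
          simp only [map_add, map_smul]; module
        have e2 : A uhat + B v - c - (A uhat + B vhat - c) = B (v - vhat) := by
          rw [map_sub]; abel
        simp only [e, norm_sq_combo, e2]
        simp only [map_add, map_smul, inner_add_right, real_inner_smul_right]
        simp only [smul_eq_mul] at hcv
        linarith)
    have e : A uhat + B v - c = (A uhat + B vhat - c) + B (v - vhat) := by
      rw [map_sub]; abel
    simp only [e, norm_add_sq_real] at hgr
    rw [hlambarp]
    rw [map_sub, inner_sub_right (A uhat + B vhat - c)] at hgr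
    simp only [inner_sub_left lamhat, real_inner_smul_left]
    linarith
  have hstar_p : hstar (ContinuousLinearMap.adjoint B lambarp)
      ≤ ⟪lambarp, B vhat⟫ - h vhat := by
    refine (hhstar _).2 ?_
    rintro _ ⟨v, hv, rfl⟩
    simpa only [ContinuousLinearMap.adjoint_inner_left] using hsub v hv
  have hstar_b : ⟪lambar, B vhat⟫ - h vhat ≤ hstar (ContinuousLinearMap.adjoint B lambar) := by
    have h1 := (hhstar (ContinuousLinearMap.adjoint B lambar)).1 ⟨vhat, hvh, rfl⟩
    simpa only [ContinuousLinearMap.adjoint_inner_left] using h1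
  obtain ⟨hup, -, -, hgSp⟩ := hgS γp hγp (ContinuousLinearMap.adjoint A lambarp)
  obtain ⟨-, hbmax, -, hgSb⟩ := hgS γ hγ (ContinuousLinearMap.adjoint A lambar)
  have hgb := hbmax uhat huh
  rw [← hgSb] at hgb
  simp only [ContinuousLinearMap.adjoint_inner_left] at hgSp hgb
  set up := uS γp (ContinuousLinearMap.adjoint A lambarp)
  -- Growth of the objective of the `u`-step between `û` and `u⁺`.
  have hgr := min_growth hgconv.1 (f := fun u => g u - ⟪lamhat, A u⟫
      + ρ / 2 * ‖A u + B vhatk - c‖ ^ 2 + γp * breg ω ω' u uc) huh hup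
      (γp / 2 * ‖up - uhat‖ ^ 2 + ρ / 2 * ‖A (up - uhat)‖ ^ 2) humin (by
        intro t ht0 ht1
        have hcv := hgconv.2 huh hup (by linarith : 0 ≤ 1 - t) ht0.le (by ring)
        have hsc := hωsc.2 huh hup (by linarith : 0 ≤ 1 - t) ht0.le (by ring)
        have e : A ((1 - t) • uhat + t • up) + B vhatk - c
            = (1 - t) • (A uhat + B vhatk - c) + t • (A up + B vhatk - c) := by
          simp only [map_add, map_smul]; module
        have e2 : A up + B vhatk - c - (A uhat + B vhatk - c) = A (up - uhat) := by
          rw [map_sub]; abel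
        rw [norm_sub_rev uhat up] at hsc
        simp only [smul_eq_mul] at hcv hsc
        have hsc' := mul_le_mul_of_nonneg_left hsc hγp.le
        simp only [e, norm_sq_combo, e2]
        simp only [breg, map_add, map_smul, inner_add_right, inner_sub_right,
          real_inner_smul_right]
        linarith)
  have e3 : A up + B vhatk - c = (A uhat + B vhatk - c) + A (up - uhat) := by
    rw [map_sub]; abel
  simp only [e3, norm_add_sq_real] at hgr
  have hstep := dual_step_s14 A (up - uhat) (A uhat + B vhatk - c) (A uhat + B vhat - c)
    hτ0 hρ hηpos hc4 (hD _ huh _ hvhatk)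
  -- The Bregman term with parameter `γ⁺` dominates the one with parameter `(1-τ) γ`.
  have hbreg : (1 - τ) * (γ * breg ω ω' uhat uc) ≤ γp * breg ω ω' uhat uc := by
    by_cases hne : uhat = uc
    · simp [breg, hne]
    have hL := one_le_lip hωgrad hωsc hLb hωlip huc huh hne
    have hb : 0 ≤ breg ω ω' uhat uc :=
      le_trans (by positivity) (breg_lower hωgrad hωsc huc huh)
    have hq := one_sub_le_ratio hτ0 hτ1 hL
    have hγγ : (1 - τ) * γ ≤ γp := (mul_le_mul_of_nonneg_right hq hγ.le).trans hc2
    linarith [mul_le_mul_of_nonneg_right hγγ hb]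
  have hgc := hgconv.2 hubar huh hτ'.le hτ0.le (by ring)
  have hhc := hhconv.2 hvbar hvh hτ'.le hτ0.le (by ring)
  rw [← hubarp] at hgc
  rw [← hvbarp] at hhc
  simp only [smul_eq_mul] at hgc hhc
  have hpen := penalty_bound (A ubar + B vbar - c) (A uhat + B vhat - c) hτ1 hβ hc3
  have e4 : (1 - τ) • (A ubar + B vbar - c) + τ • (A uhat + B vhat - c)
      = A ubarp + B vbarp - c := by
    rw [hubarp, hvbarp]; simp only [map_add, map_smul]; module
  have e5 : β⁻¹ * ⟪A ubar + B vbar - c, A uhat + B vhat - c⟫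
      = -⟪lamstark, A uhat + B vhat - c⟫ := by
    have e : lamstark = -(β⁻¹ • (A ubar + B vbar - c)) := by rw [hlamstark]; module
    rw [e, inner_neg_left, real_inner_smul_left, neg_neg]
  rw [e4, e5] at hpen
  -- Total coefficient of `‖r̂‖²`.
  have hcoef : (τ ^ 2 / (2 * ((1 - τ) * β)) - η / 2) * ‖A uhat + B vhat - c‖ ^ 2
      ≤ τ ^ 2 * η / 4 * Df ^ 2 := by
    have hk2 := residual_coef hτ1 hβ hηpos hc1
    have hr := hD _ huh _ hvh
    calc _ ≤ τ ^ 2 * η / 4 * ‖A uhat + B vhat - c‖ ^ 2 := by gcongr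
      _ ≤ _ := by gcongr
  -- The inner products that remain agree by linearity.
  have hlin : ⟪lambarp, A up⟫ + ⟪lambarp, B vhat⟫ - ⟪c, lambarp⟫
      = ⟪lamhat, A up⟫ + (1 - τ) * ⟪lambar, B vhat⟫ - (1 - τ) * ⟪c, lambar⟫
        + τ * ⟪lamstark, A uhat + B vhat - c⟫ - τ * ⟪lamstark, A uhat⟫
        - η * ⟪A uhat + B vhat - c, A (up - uhat)⟫
        - η * ‖A uhat + B vhat - c‖ ^ 2 := by
    have e : A up = (A uhat + B vhat - c) + A (up - uhat) - (B vhat - c) := by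
      rw [map_sub]; abel
    have e6 : ⟪A uhat + B vhat - c, A up⟫ = ‖A uhat + B vhat - c‖ ^ 2
        + ⟪A uhat + B vhat - c, A (up - uhat)⟫ - ⟪A uhat + B vhat - c, B vhat⟫
        + ⟪A uhat + B vhat - c, c⟫ := by
      rw [e, inner_sub_right, inner_add_right, real_inner_self_eq_norm_sq,
        inner_sub_right _ (B vhat) c]
      ring
    have e7 : ⟪lambarp, A up⟫ = ⟪lamhat, A up⟫ - η * ⟪A uhat + B vhat - c, A up⟫ := by
      rw [hlambarp, inner_sub_left, real_inner_smul_left]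
    have e8 : ⟪lambarp, B vhat⟫ = (1 - τ) * ⟪lambar, B vhat⟫ + τ * ⟪lamstark, B vhat⟫
        - η * ⟪A uhat + B vhat - c, B vhat⟫ := by
      rw [hlambarp, hlamhat, inner_sub_left, inner_add_left]
      simp only [real_inner_smul_left]
    have e9 : ⟪c, lambarp⟫ = (1 - τ) * ⟪c, lambar⟫ + τ * ⟪lamstark, c⟫
        - η * ⟪A uhat + B vhat - c, c⟫ := by
      rw [hlambarp, hlamhat, real_inner_comm, inner_sub_left, inner_add_left]
      simp only [real_inner_smul_left]
      rw [real_inner_comm c lambar]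
    have e10 : ⟪lamstark, A uhat + B vhat - c⟫
        = ⟪lamstark, A uhat⟫ + ⟪lamstark, B vhat⟫ - ⟪lamstark, c⟫ := by
      rw [inner_sub_right, inner_add_right]
    rw [e7, e8, e9, e10, e6]
    ring
  have hlin2 : ⟪lamhat, A uhat⟫ = (1 - τ) * ⟪lambar, A uhat⟫ + τ * ⟪lamstark, A uhat⟫ := by
    rw [hlamhat, inner_add_left, real_inner_smul_left, real_inner_smul_left]
  have hgb' := mul_le_mul_of_nonneg_left hgb hτ'.le
  have hstar_b' := mul_le_mul_of_nonneg_left hstar_b hτ'.le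
  rw [hGdef, hGdef, hdG, hdG, hgSp]
  linarith
end
end
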